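/- For every integer d ≥ 1, let N = 2d+1 and define the Chafee-Infante permutation σ_d of {1,…,N} by σ_d(j) = j for odd j and σ_d(j) = N+1−j for even j. Then: σ_d is a dissipative permutation; σ_d is an involution, σ_d^{−1} = σ_d; σ_d commutes with the flip, κ∘σ_d∘κ = σ_d where κ(j) = N+1−j; σ_d is Morse; and its Morse counts are #{ j : i_j = i } = 2 for every 0 ≤ i ≤ d−1, = 1 for i = d, and = 0 for i > d. -/

import Mathlib

/-- Morse numbers `i_j` of a permutation `σ` of `{1,…,N}` (extended to `ℕ`),
via the recursion `i_1 = 0`,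
`i_{j+1} = i_j + (-1)^(j+1) * sign (σ⁻¹(j+1) - σ⁻¹(j))`. -/
def morse (σ : Equiv.Perm ℕ) : ℕ → ℤ
  | 0 => 0
  | 1 => 0
  | (j+2) => morse σ (j+1) +
      (-1)^(j+2) * Int.sign ((σ.symm (j+2) : ℤ) - (σ.symm (j+1) : ℤ))

/-- Zero numbers `z_{j k}`, recursion in the first index `j`, second index `k` fixed:
`z_{1k} = 0`, `z_{kk} = i_k`, `z_{k+1,k} = min (i_k, i_{k+1})`, and otherwise
`z_{j+1,k} = z_{jk} + ((-1)^(j+1)/2) * (sign (σ⁻¹(j+1) - σ⁻¹(k)) - sign (σ⁻¹(j) - σ⁻¹(k)))`. -/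
def zrec (σ : Equiv.Perm ℕ) (k : ℕ) : ℕ → ℤ
  | 0 => 0
  | 1 => 0
  | (j+2) =>
      if j+2 = k then morse σ k
      else if j+1 = k then min (morse σ k) (morse σ (k+1))
      else zrec σ k (j+1) +
        ((-1)^(j+2) * (Int.sign ((σ.symm (j+2) : ℤ) - (σ.symm k : ℤ))
          - Int.sign ((σ.symm (j+1) : ℤ) - (σ.symm k : ℤ)))) / 2

/-- The zero number `z_{m n}`. -/
def zfun (σ : Equiv.Perm ℕ) (m n : ℕ) : ℤ := zrec σ n m

/-- The connection digraph of a dissipative Morse permutation `σ` of `{1,…,N}`: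
an edge `m ⤳ n` iff `i_m = i_n + 1` and no `w` strictly between `m` and `n`
blocks, i.e. satisfies `z_{mw} = z_{wn} = z_{mn}`. -/
def hasEdge (N : ℕ) (σ : Equiv.Perm ℕ) (m n : ℕ) : Prop :=
  1 ≤ m ∧ m ≤ N ∧ 1 ≤ n ∧ n ≤ N ∧
  morse σ m = morse σ n + 1 ∧
  ¬ ∃ w : ℕ, min m n < w ∧ w < max m n ∧
      zfun σ m w = zfun σ w n ∧ zfun σ w n = zfun σ m n

/-- A dissipative permutation of `{1,…,N}`. -/
def Dissipative (N : ℕ) (σ : Equiv.Perm ℕ) : Prop :=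
  Set.BijOn σ (Set.Icc 1 N) (Set.Icc 1 N) ∧ σ 1 = 1 ∧ σ N = N

/-- The Morse property: all Morse numbers are nonnegative. -/
def MorseProp (N : ℕ) (σ : Equiv.Perm ℕ) : Prop :=
  ∀ j, 1 ≤ j → j ≤ N → 0 ≤ morse σ j

/-- Morse counts `μ(i) = #{j ∈ {1,…,N} : i_j = i}`. -/
def morseCount (N : ℕ) (σ : Equiv.Perm ℕ) (i : ℤ) : ℕ :=
  ((Finset.Icc 1 N).filter (fun j => morse σ j = i)).card

/-- The primitive 3-nose permutation `σ_{rq}` of `{1,…,N}`, `N = 2(r+1)(q+1)-1`,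
characterized by its defining relations, extended to a permutation of `ℕ`
fixing everything outside `{1,…,N}`. -/
def SigmaRQ (r q : ℕ) (σ : Equiv.Perm ℕ) : Prop :=
  (∀ a, a ∉ Set.Icc 1 (2*(r+1)*(q+1) - 1) → σ a = a) ∧
  (∀ j k, j ≤ r → k ≤ q →
    σ (2*((q+1)*j+k)+1) = 2*(j+(r+1)*k)+1) ∧
  (∀ j k, j ≤ r → k ≤ q → ¬(j = 0 ∧ k = 0) →
    σ (2*((q+1)*(r-j)+(q-k)+1)) = 2*(j+(r+1)*k))

/-- Tags `A`, `B` of equilibrium labels `A^j_k`, `B^j_k`. -/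
inductive Tag | A | B
deriving DecidableEq

/-- The axis position (`h_1`-position) of the label `L^j_k` for parameters `(r,q)`. -/
def axisPos (r q : ℕ) : Tag → ℕ → ℕ → ℕ
  | Tag.A, j, k => if Odd j then (q+1)*(j-1)+k+1 else (q+1)*(2*r+1-j)+(q-k)+1
  | Tag.B, j, k => if Odd j then (q+1)*j+(q-k)+1 else (q+1)*(2*r-j)+k+1

/-- The meander position (`h_0`-position) of the label `L^j_k` for parameters `(r,q)`. -/
def meanderPos (r q : ℕ) : Tag → ℕ → ℕ → ℕ
  | Tag.A, j, k => if Odd k then (r+1)*(2*q+1-k)+(2*r+1-j) else (r+1)*k+j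
  | Tag.B, j, k => if Odd k then (r+1)*(2*q+1-k)+j else (r+1)*(k+1)+(r-j)

/-- The suspension `σ̃` of a dissipative permutation `σ` of `{1,…,N}`:
`σ̃(1) = 1`, `σ̃(N+2) = N+2`, and `σ̃(a+1) = N+2 - σ(a)` for `1 ≤ a ≤ N`. -/
def IsSuspension (N : ℕ) (σ σt : Equiv.Perm ℕ) : Prop :=
  σt 1 = 1 ∧ σt (N+2) = N+2 ∧ ∀ a, 1 ≤ a → a ≤ N → σt (a+1) = N+2 - σ a

/-- The label `A^0_0` is the distinguished (formal) vertex `⋆`. -/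
def IsStar (L : Tag) (j k : ℕ) : Prop := L = Tag.A ∧ j = 0 ∧ k = 0

/-- Tag swap `A ↔ B`, used by the reversor. -/
def tagSwap : Tag → Tag
  | Tag.A => Tag.B
  | Tag.B => Tag.A

/-- the Chafee-Infante permutation `σ_d` of `{1,…,2d+1}`
(`σ_d(j) = j` for odd `j`, `σ_d(j) = N+1-j` for even `j`) is dissipative, an
involution, commutes with the flip `κ`, is Morse, and has Morse counts
`2,…,2,1` at levels `0,…,d-1,d`. -/
theorem stmt_17 (d : ℕ) (hd : 1 ≤ d) (σ : Equiv.Perm ℕ)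
    (hodd : ∀ j, 1 ≤ j → j ≤ 2*d+1 → Odd j → σ j = j)
    (heven : ∀ j, 1 ≤ j → j ≤ 2*d+1 → Even j → σ j = 2*d+2-j)
    (hfix : ∀ a, a ∉ Set.Icc 1 (2*d+1) → σ a = a) :
    Dissipative (2*d+1) σ ∧
    (∀ a, σ.symm a = σ a) ∧
    (∀ j, 1 ≤ j → j ≤ 2*d+1 → σ (2*d+2-j) = 2*d+2 - σ j) ∧
    MorseProp (2*d+1) σ ∧
    (∀ i : ℕ, i < d → morseCount (2*d+1) σ i = 2) ∧
    morseCount (2*d+1) σ d = 1 ∧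
    (∀ i : ℕ, d < i → morseCount (2*d+1) σ i = 0) := by
  have hinv : ∀ a, σ (σ a) = a := by
    intro a
    by_cases h : a ∈ Set.Icc 1 (2*d+1)
    · obtain ⟨h1, h2⟩ := h
      rcases Nat.even_or_odd a with he | ho
      · have hs := heven a h1 h2 he
        obtain ⟨k, hk⟩ := he
        rw [hs, heven _ (by omega) (by omega) ⟨d + 1 - k, by omega⟩]
        omega
      · rw [hodd a h1 h2 ho, hodd a h1 h2 ho]
    · rw [hfix a h, hfix a h]
  have hsymm : ∀ a, σ.symm a = σ a := by
    intro a
    rw [Equiv.symm_apply_eq, hinv]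
  have hmaps : Set.MapsTo σ (Set.Icc 1 (2*d+1)) (Set.Icc 1 (2*d+1)) := by
    rintro a ⟨h1, h2⟩
    rcases Nat.even_or_odd a with he | ho
    · rw [heven a h1 h2 he]
      obtain ⟨k, hk⟩ := he
      exact ⟨by omega, by omega⟩
    · rw [hodd a h1 h2 ho]
      exact ⟨h1, h2⟩
  have hmorse : ∀ j : ℕ, j ≤ 2*d → morse σ (j+1) = min (j : ℤ) (2*d - j) := by
    intro j
    induction j with
    | zero =>
      intro _
      simp [morse]
    | succ j ih =>
      intro hj
      have ih' := ih (by omega)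
      rw [morse, ih', hsymm, hsymm]
      rcases Nat.even_or_odd j with he | ho
      · have e2 : Even (j+2) := by grind
        have o1 : Odd (j+1) := by grind
        rw [heven (j+2) (by omega) (by omega) e2, hodd (j+1) (by omega) (by omega) o1,
          e2.neg_one_pow]
        rcases Nat.lt_or_ge j d with h | h
        · rw [Int.sign_eq_one_of_pos (by omega)]; omega
        · rw [Int.sign_eq_neg_one_of_neg (by omega)]; omega
      · have o2 : Odd (j+2) := by grind
        have e1 : Even (j+1) := by grind
        rw [hodd (j+2) (by omega) (by omega) o2, heven (j+1) (by omega) (by omega) e1,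
          o2.neg_one_pow]
        rcases Nat.lt_or_ge j d with h | h
        · rw [Int.sign_eq_neg_one_of_neg (by grind)]; omega
        · rw [Int.sign_eq_one_of_pos (by omega)]; omega
  have hm : ∀ j : ℕ, 1 ≤ j → j ≤ 2*d+1 → morse σ j = min ((j : ℤ) - 1) (2*d + 1 - j) := by
    intro j h1 h2
    obtain ⟨k, rfl⟩ := Nat.exists_eq_add_of_le' h1
    rw [hmorse k (by omega)]
    omega
  refine ⟨⟨⟨hmaps, σ.injective.injOn, fun a ha => ⟨σ a, hmaps ha, hinv a⟩⟩,
    hodd 1 (by omega) (by omega) (by decide), hodd _ (by omega) (by omega) ⟨d, rfl⟩⟩,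
    hsymm, ?_, ?_, ?_, ?_, ?_⟩
  · intro j h1 h2
    rcases Nat.even_or_odd j with he | ho
    · have hs := heven j h1 h2 he
      obtain ⟨k, hk⟩ := he
      rw [hs, heven _ (by omega) (by omega) ⟨d + 1 - k, by omega⟩]
    · have hs := hodd j h1 h2 ho
      obtain ⟨k, hk⟩ := ho
      rw [hs, hodd _ (by omega) (by omega) ⟨d - k, by omega⟩]
  · intro j h1 h2
    rw [hm j h1 h2]
    omega
  · intro i hi
    have : (Finset.Icc 1 (2*d+1)).filter (fun j => morse σ j = (i : ℤ)) = {i+1, 2*d+1-i} := by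
      ext j
      simp only [Finset.mem_filter, Finset.mem_Icc, Finset.mem_insert, Finset.mem_singleton]
      constructor
      · rintro ⟨⟨h1, h2⟩, h⟩
        rw [hm j h1 h2] at h
        omega
      · intro h
        have h1 : 1 ≤ j := by omega
        have h2 : j ≤ 2*d+1 := by omega
        refine ⟨⟨h1, h2⟩, ?_⟩
        rw [hm j h1 h2]
        omega
    rw [morseCount, this, Finset.card_pair (by omega)]
  · have : (Finset.Icc 1 (2*d+1)).filter (fun j => morse σ j = (d : ℤ)) = {d+1} := by
      ext j
      simp only [Finset.mem_filter, Finset.mem_Icc, Finset.mem_singleton]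
      constructor
      · rintro ⟨⟨h1, h2⟩, h⟩
        rw [hm j h1 h2] at h
        omega
      · intro h
        have h1 : 1 ≤ j := by omega
        have h2 : j ≤ 2*d+1 := by omega
        refine ⟨⟨h1, h2⟩, ?_⟩
        rw [hm j h1 h2]
        omega
    rw [morseCount, this, Finset.card_singleton]
  · intro i hi
    rw [morseCount, Finset.card_eq_zero, Finset.filter_eq_empty_iff]
    intro j hj
    obtain ⟨h1, h2⟩ := Finset.mem_Icc.mp hj
    rw [hm j h1 h2]
    omega
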